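/- A primitive vector v of a symplectic lattice Λ is splitting, i.e., lies in a rank-2 sublattice Λ₁ with Λ = Λ₁ ⊕ Λ₁^⊥ (orthogonal direct sum), if and only if there exists a primitive vector w ∈ Λ with div(w) = div(v) and (v, w) = div(v). -/

import Mathlib

noncomputable section

open Submodule

variable {V : Type} [AddCommGroup V] [Module ℚ V]

/-- The dual lattice `Λ^∨ = {v ∈ Λ⊗ℚ : (v, Λ) ⊆ ℤ}` of a lattice `L` (inside the
ambient rational vector space `V = Λ⊗ℚ`) with respect to the form `B`. -/
def dualLattice (B : V →ₗ[ℚ] V →ₗ[ℚ] ℚ) (L : Submodule ℤ V) : Submodule ℤ V where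
  carrier := {v : V | ∀ x ∈ L, ∃ n : ℤ, B v x = (n : ℚ)}
  zero_mem' := fun x _ => ⟨0, by simp⟩
  add_mem' := by
    intro a b ha hb x hx
    obtain ⟨n, hn⟩ := ha x hx
    obtain ⟨m, hm⟩ := hb x hx
    exact ⟨n + m, by rw [map_add, LinearMap.add_apply, hn, hm]; push_cast; ring⟩
  smul_mem' := by
    intro c a ha x hx
    obtain ⟨n, hn⟩ := ha x hx
    refine ⟨c * n, ?_⟩
    have h1 : B (c • a) x = (B.flip x) (c • a) := rfl
    rw [h1, map_zsmul, LinearMap.flip_apply, hn, zsmul_eq_mul]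
    push_cast; ring

/-- A vector `v` is primitive in the lattice `L` if `ℚv ∩ L = ℤv`. -/
def IsPrimitive (L : Submodule ℤ V) (v : V) : Prop :=
  v ∈ L ∧ (Submodule.span ℚ {v}).restrictScalars ℤ ⊓ L = Submodule.span ℤ {v}

/-- `div(v) = d`, i.e. the ideal `(v, L) ⊆ ℤ` is generated by the positive integer `d`. -/
def HasDiv (B : V →ₗ[ℚ] V →ₗ[ℚ] ℚ) (L : Submodule ℤ V) (v : V) (d : ℕ) : Prop :=
  0 < d ∧ (∀ x ∈ L, ∃ n : ℤ, B v x = (n : ℚ) * (d : ℚ)) ∧ (∃ x ∈ L, B v x = (d : ℚ))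

/-- `v* = v / div(v)`. -/
def vstar (v : V) (d : ℕ) : V := ((d : ℚ))⁻¹ • v

lemma vstar_mem {B : V →ₗ[ℚ] V →ₗ[ℚ] ℚ} {L : Submodule ℤ V} {v : V} {d : ℕ}
    (h : HasDiv B L v d) : vstar v d ∈ dualLattice B L := by
  intro x hx
  obtain ⟨n, hn⟩ := h.2.1 x hx
  refine ⟨n, ?_⟩
  have hd : (d : ℚ) ≠ 0 := Nat.cast_ne_zero.mpr h.1.ne'
  show B (((d : ℚ))⁻¹ • v) x = (n : ℚ)
  rw [map_smul, LinearMap.smul_apply, hn, smul_eq_mul]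
  field_simp

/-- The discriminant group `D_Λ = Λ^∨ / Λ`. -/
abbrev DiscGroup (B : V →ₗ[ℚ] V →ₗ[ℚ] ℚ) (L : Submodule ℤ V) :=
  dualLattice B L ⧸ (L.comap (dualLattice B L).subtype)

/-- The class of an element of the dual lattice in the discriminant group. -/
def discCls (B : V →ₗ[ℚ] V →ₗ[ℚ] ℚ) (L : Submodule ℤ V) (v : dualLattice B L) :
    DiscGroup B L := Submodule.Quotient.mk v

/-- `γ` is an isometry of the lattice `L`, i.e. an element of `Sp(Λ)` (viewed as a
rational linear automorphism of the ambient space preserving `L` and the form). -/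
def IsIsometry (B : V →ₗ[ℚ] V →ₗ[ℚ] ℚ) (L : Submodule ℤ V) (γ : V ≃ₗ[ℚ] V) : Prop :=
  (∀ v, v ∈ L ↔ γ v ∈ L) ∧ ∀ v w, B (γ v) (γ w) = B v w

/-- `γ` lies in `Γ_Λ`: it is an isometry of `L` acting trivially on the discriminant
group, i.e. `γ(v) ≡ v mod Λ` for every `v ∈ Λ^∨`. -/
def InGamma (B : V →ₗ[ℚ] V →ₗ[ℚ] ℚ) (L : Submodule ℤ V) (γ : V ≃ₗ[ℚ] V) : Prop :=
  IsIsometry B L γ ∧ ∀ v ∈ dualLattice B L, γ v - v ∈ L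

lemma isometry_dual_mem {B : V →ₗ[ℚ] V →ₗ[ℚ] ℚ} {L : Submodule ℤ V} {γ : V ≃ₗ[ℚ] V}
    (h : IsIsometry B L γ) {u : V} (hu : u ∈ dualLattice B L) :
    γ u ∈ dualLattice B L := by
  intro x hx
  have hx' : γ.symm x ∈ L := by
    rw [h.1 (γ.symm x), LinearEquiv.apply_symm_apply]
    exact hx
  obtain ⟨n, hn⟩ := hu (γ.symm x) hx'
  refine ⟨n, ?_⟩
  have := h.2 u (γ.symm x)
  rw [LinearEquiv.apply_symm_apply] at this
  rw [this, hn]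

/-- The transvection `T_{l,m} : v ↦ v + (l,v)m + (m,v)l` on the rational vector space. -/
def transvection (B : V →ₗ[ℚ] V →ₗ[ℚ] ℚ) (l m : V) : V →ₗ[ℚ] V :=
  LinearMap.id + (B l).smulRight m + (B m).smulRight l

/-- An orthogonal decomposition `Λ = U ⊕ Λ'` with `U` a hyperbolic plane spanned by
`e, f` with `(e,f) = 1`. -/
def OrthoDecompU (B : V →ₗ[ℚ] V →ₗ[ℚ] ℚ) (L : Submodule ℤ V)
    (e f : V) (L' : Submodule ℤ V) : Prop :=
  e ∈ L ∧ f ∈ L ∧ L' ≤ L ∧ B e f = 1 ∧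
  (∀ z ∈ L', B e z = 0 ∧ B f z = 0) ∧
  Submodule.span ℤ {e, f} ⊔ L' = L

/-- An orthogonal decomposition `Λ = U₁ ⊕ U₂ ⊕ Λ''` with `U₁, U₂` hyperbolic planes. -/
def OrthoDecompUU (B : V →ₗ[ℚ] V →ₗ[ℚ] ℚ) (L : Submodule ℤ V)
    (e₁ f₁ e₂ f₂ : V) (L'' : Submodule ℤ V) : Prop :=
  e₁ ∈ L ∧ f₁ ∈ L ∧ e₂ ∈ L ∧ f₂ ∈ L ∧ L'' ≤ L ∧
  B e₁ f₁ = 1 ∧ B e₂ f₂ = 1 ∧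
  B e₁ e₂ = 0 ∧ B e₁ f₂ = 0 ∧ B f₁ e₂ = 0 ∧ B f₁ f₂ = 0 ∧
  (∀ z ∈ L'', B e₁ z = 0 ∧ B f₁ z = 0 ∧ B e₂ z = 0 ∧ B f₂ z = 0) ∧
  Submodule.span ℤ {e₁, f₁} ⊔ Submodule.span ℤ {e₂, f₂} ⊔ L'' = L

/-- An orthogonal decomposition `Λ = U ⊕ U(p) ⊕ ⋯ ⊕ U(p)`. -/
def OrthoDecompUUp (B : V →ₗ[ℚ] V →ₗ[ℚ] ℚ) (L : Submodule ℤ V) (p : ℕ)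
    (e f : V) {ι : Type} (E F : ι → V) : Prop :=
  e ∈ L ∧ f ∈ L ∧ (∀ i, E i ∈ L) ∧ (∀ i, F i ∈ L) ∧
  B e f = 1 ∧ (∀ i, B (E i) (F i) = (p : ℚ)) ∧
  (∀ i, B e (E i) = 0 ∧ B e (F i) = 0 ∧ B f (E i) = 0 ∧ B f (F i) = 0) ∧
  (∀ i j, i ≠ j → B (E i) (E j) = 0 ∧ B (E i) (F j) = 0 ∧ B (F i) (F j) = 0) ∧
  Submodule.span ℤ ({e, f} ∪ Set.range E ∪ Set.range F) = L

/-- An orthogonal decomposition `Λ = U(d₁) ⊕ ⋯ ⊕ U(d_g)`. -/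
def OrthoDecompType (B : V →ₗ[ℚ] V →ₗ[ℚ] ℚ) (L : Submodule ℤ V) {g : ℕ}
    (d : Fin g → ℕ) (E F : Fin g → V) : Prop :=
  (∀ i, E i ∈ L) ∧ (∀ i, F i ∈ L) ∧
  (∀ i, B (E i) (F i) = (d i : ℚ)) ∧
  (∀ i j, i ≠ j → B (E i) (E j) = 0 ∧ B (E i) (F j) = 0 ∧ B (F i) (F j) = 0) ∧
  Submodule.span ℤ (Set.range E ∪ Set.range F) = L

lemma coe_int_addCircle (n : ℤ) : (((n : ℚ) : AddCircle (1 : ℚ))) = 0 := by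
  have hmem : ((n : ℚ)) ∈ AddSubgroup.zmultiples (1 : ℚ) := ⟨n, by simp⟩
  exact (QuotientAddGroup.eq_zero_iff _).mpr hmem

lemma bilin_antisymm (B : V →ₗ[ℚ] V →ₗ[ℚ] ℚ) (halt : ∀ v, B v v = 0) (a b : V) :
    B a b = - B b a := by
  have h := halt (a + b)
  simp only [map_add, LinearMap.add_apply] at h
  rw [halt a, halt b] at h
  linarith

/-- The `ℚ/ℤ`-valued pairing on the dual lattice. -/
def rationalPairing (B : V →ₗ[ℚ] V →ₗ[ℚ] ℚ) (L : Submodule ℤ V) :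
    dualLattice B L →ₗ[ℤ] dualLattice B L →ₗ[ℤ] AddCircle (1 : ℚ) :=
  LinearMap.mk₂ ℤ (fun v w => ((B v.1 w.1 : ℚ) : AddCircle (1 : ℚ)))
    (fun v v' w => by
      beta_reduce
      rw [Submodule.coe_add, map_add, LinearMap.add_apply]
      exact QuotientAddGroup.mk_add (AddSubgroup.zmultiples (1 : ℚ)) _ _)
    (fun c v w => by
      beta_reduce
      have h1 : B ((c • v : dualLattice B L) : V) (w : V)
          = c • (B (v : V) (w : V)) := by
        have h2 : B ((c • v : dualLattice B L) : V) (w : V)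
            = (B.flip (w : V)) ((c • v : dualLattice B L) : V) := rfl
        rw [h2, Submodule.coe_smul, map_zsmul, LinearMap.flip_apply]
      rw [h1]
      exact QuotientAddGroup.mk_zsmul (AddSubgroup.zmultiples (1 : ℚ)) _ _
    )
    (fun v w w' => by
      beta_reduce
      rw [Submodule.coe_add, map_add]
      exact QuotientAddGroup.mk_add (AddSubgroup.zmultiples (1 : ℚ)) _ _)
    (fun c v w => by
      beta_reduce
      rw [Submodule.coe_smul, map_zsmul]
      exact QuotientAddGroup.mk_zsmul (AddSubgroup.zmultiples (1 : ℚ)) _ _)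

/-- The discriminant form on `D_Λ`, with values in `ℚ/ℤ`. -/
def discForm (B : V →ₗ[ℚ] V →ₗ[ℚ] ℚ) (L : Submodule ℤ V) (halt : ∀ v, B v v = 0) :
    DiscGroup B L →ₗ[ℤ] DiscGroup B L →ₗ[ℤ] AddCircle (1 : ℚ) :=
  (Submodule.liftQ _
    ((Submodule.liftQ _ (rationalPairing B L) (by
      intro v hv
      rw [LinearMap.mem_ker]
      refine LinearMap.ext fun w => ?_
      have hv' : (v : V) ∈ L := hv
      obtain ⟨n, hn⟩ := w.2 (v : V) hv'
      show ((B (v : V) (w : V) : ℚ) : AddCircle (1 : ℚ)) = 0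
      have h3 : B (v : V) (w : V) = ((-n : ℤ) : ℚ) := by
        rw [bilin_antisymm B halt, hn]; push_cast; ring
      rw [h3]
      exact coe_int_addCircle _)).flip) (by
      intro w hw
      rw [LinearMap.mem_ker]
      refine LinearMap.ext fun x => ?_
      obtain ⟨v, rfl⟩ := Submodule.Quotient.mk_surjective _ x
      have hw' : (w : V) ∈ L := hw
      obtain ⟨n, hn⟩ := v.2 (w : V) hw'
      show ((B (v : V) (w : V) : ℚ) : AddCircle (1 : ℚ)) = 0
      rw [hn]
      exact coe_int_addCircle _)).flip

/-- The orthogonal complement of a subgroup of the discriminant group with respect to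
the discriminant form. -/
def discOrth (B : V →ₗ[ℚ] V →ₗ[ℚ] ℚ) (L : Submodule ℤ V) (halt : ∀ v, B v v = 0)
    (D' : Submodule ℤ (DiscGroup B L)) : Submodule ℤ (DiscGroup B L) :=
  ⨅ y ∈ D', LinearMap.ker ((discForm B L halt).flip y)

/-- A splitting element of the discriminant group: `x` of order `d` lies in a subgroup
`D' ≅ (ℤ/d)²` with `D_Λ = D' ⊕ D'^⊥`. -/
def IsSplitElem (B : V →ₗ[ℚ] V →ₗ[ℚ] ℚ) (L : Submodule ℤ V) (halt : ∀ v, B v v = 0)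
    (x : DiscGroup B L) : Prop :=
  ∃ D' : Submodule ℤ (DiscGroup B L), x ∈ D' ∧
    Nonempty (D' ≃+ (ZMod (addOrderOf x) × ZMod (addOrderOf x))) ∧
    D' ⊔ discOrth B L halt D' = ⊤ ∧ D' ⊓ discOrth B L halt D' = ⊥

/-- The orthogonal complement `Λ₁^⊥ = {z ∈ Λ : (z, Λ₁) = 0}` of a sublattice inside `L`. -/
def orthCompIn (B : V →ₗ[ℚ] V →ₗ[ℚ] ℚ) (L L₁ : Submodule ℤ V) : Submodule ℤ V where
  carrier := {z | z ∈ L ∧ ∀ y ∈ L₁, B z y = 0}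
  zero_mem' := ⟨L.zero_mem, fun y _ => by simp⟩
  add_mem' := by
    intro a b ha hb
    refine ⟨L.add_mem ha.1 hb.1, fun y hy => ?_⟩
    rw [map_add, LinearMap.add_apply, ha.2 y hy, hb.2 y hy, add_zero]
  smul_mem' := by
    intro c a ha
    refine ⟨L.smul_mem c ha.1, fun y hy => ?_⟩
    have h1 : B (c • a) y = (B.flip y) (c • a) := rfl
    rw [h1, map_zsmul, LinearMap.flip_apply, ha.2 y hy, smul_zero]

/-- A splitting (primitive) vector: `v` lies in a rank 2 sublattice `Λ₁` with
`Λ = Λ₁ ⊕ Λ₁^⊥` (orthogonal direct sum). -/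
def IsSplitVec (B : V →ₗ[ℚ] V →ₗ[ℚ] ℚ) (L : Submodule ℤ V) (v : V) : Prop :=
  ∃ L₁ : Submodule ℤ V, v ∈ L₁ ∧ L₁ ≤ L ∧ Module.finrank ℤ L₁ = 2 ∧
    L₁ ⊔ orthCompIn B L L₁ = L ∧ L₁ ⊓ orthCompIn B L L₁ = ⊥

end

/-!
If `Λ = Λ₁ ⊕ Λ₁^⊥` has `v` in the rank-2 summand `Λ₁`, projecting to `Λ₁` a vector that pairs
with `v` to `d = div(v)` gives `w ∈ Λ₁` with `(v, w) = d`. Since `d` divides `(v, Λ)`, subtracting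
multiples of `w` reduces any element of `Λ₁` to one orthogonal to `v`; within rank 2 this is a
rational multiple of `v`, hence an integral one by primitivity. So `Λ₁ = ℤv + ℤw`, and
`(w, Λ) = (w, Λ₁) = dℤ`. Conversely, for a partner `w` the formula
`x ↦ ((v, x) w - (w, x) v) / d` is an integral orthogonal projection onto `ℤv + ℤw`.
-/

section RankTwo

variable {R K M P : Type*} [CommRing R] [DivisionRing K] [Algebra R K] [FaithfulSMul R K]
  [AddCommGroup M] [Module R M] [Module K M] [IsScalarTower R K M]
  [AddCommGroup P] [Module K P]

lemma linearIndependent_triple_of_map_eq_zero {f : M →ₗ[K] P} {x y w : M}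
    (hxy : LinearIndependent K ![x, y]) (hx : f x = 0) (hy : f y = 0) (hw : f w ≠ 0) :
    LinearIndependent K ![w, x, y] := by
  have hker : Submodule.span K (Set.range ![x, y]) ≤ LinearMap.ker f := by
    simp [Submodule.span_le, Set.insert_subset_iff, hx, hy]
  exact linearIndependent_finCons.2 ⟨hxy, fun h => hw (hker h)⟩

lemma mem_span_singleton_of_finrank_eq_two {N : Submodule R M} (hN : Module.finrank R N = 2)
    {f : M →ₗ[K] P} {x y w : M} (hxN : x ∈ N) (hyN : y ∈ N) (hwN : w ∈ N)
    (hx0 : x ≠ 0) (hx : f x = 0) (hy : f y = 0) (hw : f w ≠ 0) :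
    y ∈ Submodule.span K {x} := by
  by_contra hspan
  have hxy : LinearIndependent K ![x, y] :=
    (LinearIndependent.pair_iff' hx0).2 fun a ha => hspan (Submodule.mem_span_singleton.2 ⟨a, ha⟩)
  have htriple : LinearIndependent R (![⟨w, hwN⟩, ⟨x, hxN⟩, ⟨y, hyN⟩] : Fin 3 → N) := by
    refine .of_comp N.subtype ?_
    convert (linearIndependent_triple_of_map_eq_zero hxy hx hy hw).restrict_scalars' R using 1
    ext i
    fin_cases i <;> rfl
  have : Nontrivial R := (algebraMap R K).domain_nontrivial
  have hcard := htriple.cardinal_lift_le_rank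
  rw [(Module.rank_eq_ofNat_iff_finrank_eq_ofNat 2).2 hN] at hcard
  norm_num at hcard

end RankTwo

section SymplecticLattice

variable {V : Type} [AddCommGroup V] [Module ℚ V] {B : V →ₗ[ℚ] V →ₗ[ℚ] ℚ}
  {L L₁ : Submodule ℤ V} {v w : V} {d : ℕ}

lemma HasDiv.cast_ne_zero (hd : HasDiv B L v d) : (d : ℚ) ≠ 0 :=
  Nat.cast_ne_zero.2 hd.1.ne'

lemma HasDiv.ne_zero (hd : HasDiv B L v d) : v ≠ 0 := by
  rintro rfl
  obtain ⟨x, -, hx⟩ := hd.2.2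
  exact hd.cast_ne_zero (by simpa using hx.symm)

lemma HasDiv.isPrimitive_of_apply_eq (hd : HasDiv B L v d) (hw : w ∈ L) (hvw : B v w = d) :
    IsPrimitive L w := by
  refine ⟨hw, le_antisymm ?_ ?_⟩
  · rintro y ⟨hyw, hyL⟩
    obtain ⟨q, rfl⟩ := Submodule.mem_span_singleton.1 hyw
    obtain ⟨n, hn⟩ := hd.2.1 _ hyL
    have hq : q = n := mul_right_cancel₀ hd.cast_ne_zero (by simpa [hvw] using hn)
    rw [hq, Int.cast_smul_eq_zsmul]
    exact Submodule.smul_mem _ n (Submodule.mem_span_singleton_self w)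
  · rw [Submodule.span_singleton_le_iff_mem]
    exact ⟨Submodule.mem_span_singleton_self (R := ℚ) w, hw⟩

lemma orthCompIn_le : orthCompIn B L L₁ ≤ L := fun _ hz => hz.1

lemma mem_orthCompIn_span_pair {z : V} :
    z ∈ orthCompIn B L (Submodule.span ℤ {v, w}) ↔ z ∈ L ∧ B z v = 0 ∧ B z w = 0 := by
  refine and_congr_right fun _ => ⟨fun h => ⟨h v ?_, h w ?_⟩, fun ⟨hv, hw⟩ y hy => ?_⟩
  · exact Submodule.mem_span_of_mem (by simp)
  · exact Submodule.mem_span_of_mem (by simp)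
  · obtain ⟨a, b, rfl⟩ := Submodule.mem_span_pair.1 hy
    simp [hv, hw]

lemma exists_mem_apply_eq_of_sup_orthCompIn_eq (hB : B.IsAlt) (hsup : L₁ ⊔ orthCompIn B L L₁ = L)
    {x : V} (hx : x ∈ L) : ∃ y ∈ L₁, ∀ u ∈ L₁, B u x = B u y := by
  rw [← hsup] at hx
  obtain ⟨y, hy, z, hz, rfl⟩ := Submodule.mem_sup.1 hx
  refine ⟨y, hy, fun u hu => ?_⟩
  rw [map_add, ← hB.neg z u, hz.2 u hu, neg_zero, add_zero]

lemma eq_span_pair_of_finrank_eq_two (hB : B.IsAlt) (hv : IsPrimitive L v) (hd : HasDiv B L v d)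
    (hL₁ : L₁ ≤ L) (hrank : Module.finrank ℤ L₁ = 2) (hvL₁ : v ∈ L₁) (hwL₁ : w ∈ L₁)
    (hvw : B v w = d) : L₁ = Submodule.span ℤ {v, w} := by
  apply le_antisymm
  · intro y hy
    obtain ⟨n, hn⟩ := hd.2.1 y (hL₁ hy)
    have hmem : y - n • w ∈ L₁ := L₁.sub_mem hy (L₁.smul_mem n hwL₁)
    have horth : B v (y - n • w) = 0 := by simp [hn, hvw]
    have hrational : y - n • w ∈ Submodule.span ℚ {v} :=
      mem_span_singleton_of_finrank_eq_two hrank hvL₁ hmem hwL₁ hd.ne_zero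
        (hB.self_eq_zero v) horth (hvw ▸ hd.cast_ne_zero)
    have hintegral : y - n • w ∈ Submodule.span ℤ {v} := hv.2 ▸ ⟨hrational, hL₁ hmem⟩
    obtain ⟨m, hm⟩ := Submodule.mem_span_singleton.1 hintegral
    exact Submodule.mem_span_pair.2 ⟨m, n, by rw [hm, sub_add_cancel]⟩
  · simp [Submodule.span_le, Set.insert_subset_iff, hvL₁, hwL₁]

lemma hasDiv_of_span_pair_sup_orthCompIn_eq (hB : B.IsAlt) (hd : 0 < d) (hvw : B v w = d)
    (hsup : Submodule.span ℤ {v, w} ⊔ orthCompIn B L (Submodule.span ℤ {v, w}) = L) :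
    HasDiv B L w d := by
  have hvL : v ∈ L := hsup ▸ Submodule.mem_sup_left (Submodule.mem_span_of_mem (by simp))
  have hwv : B w v = -d := by rw [← hB.neg v w, hvw]
  refine ⟨hd, fun x hx => ?_, -v, L.neg_mem hvL, by rw [map_neg, hwv, neg_neg]⟩
  obtain ⟨y, hy, hxy⟩ := exists_mem_apply_eq_of_sup_orthCompIn_eq hB hsup hx
  obtain ⟨a, b, rfl⟩ := Submodule.mem_span_pair.1 hy
  refine ⟨-a, ?_⟩
  rw [hxy w (Submodule.mem_span_of_mem (by simp))]
  simp [hwv, hB.self_eq_zero w]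

lemma IsSplitVec.exists_partner (hB : B.IsAlt) (hv : IsPrimitive L v) (hd : HasDiv B L v d)
    (hsplit : IsSplitVec B L v) : ∃ w, IsPrimitive L w ∧ HasDiv B L w d ∧ B v w = d := by
  obtain ⟨L₁, hvL₁, hL₁, hrank, hsup, -⟩ := hsplit
  obtain ⟨x, hx, hvx⟩ := hd.2.2
  obtain ⟨w, hw, hxw⟩ := exists_mem_apply_eq_of_sup_orthCompIn_eq hB hsup hx
  have hvw : B v w = d := by rw [← hxw v hvL₁, hvx]
  obtain rfl := eq_span_pair_of_finrank_eq_two hB hv hd hL₁ hrank hvL₁ hw hvw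
  exact ⟨w, hd.isPrimitive_of_apply_eq (hL₁ hw) hvw,
    hasDiv_of_span_pair_sup_orthCompIn_eq hB hd.1 hvw hsup, hvw⟩

lemma finrank_span_pair_eq_two (hB : B.IsAlt) (hvw : B v w ≠ 0) :
    Module.finrank ℤ (Submodule.span ℤ {v, w}) = 2 := by
  have hv0 : v ≠ 0 := by
    rintro rfl
    exact hvw (by simp)
  have hpair : LinearIndependent ℚ ![v, w] := by
    refine (LinearIndependent.pair_iff' hv0).2 ?_
    rintro a rfl
    exact hvw (by simp [hB.self_eq_zero v])
  rw [← Matrix.range_cons_cons_empty v w ![], finrank_span_eq_card (hpair.restrict_scalars' ℤ),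
    Fintype.card_fin]

lemma span_pair_inf_orthCompIn_eq_bot (hB : B.IsAlt) (hvw : B v w ≠ 0) :
    Submodule.span ℤ {v, w} ⊓ orthCompIn B L (Submodule.span ℤ {v, w}) = ⊥ := by
  rw [eq_bot_iff]
  rintro x ⟨hx, hxorth⟩
  obtain ⟨a, b, rfl⟩ := Submodule.mem_span_pair.1 hx
  obtain ⟨-, hxv, hxw⟩ := mem_orthCompIn_span_pair.1 hxorth
  have ha : a = 0 := by simpa [hB.self_eq_zero w, hvw] using hxw
  have hb : b = 0 := by simpa [hB.self_eq_zero v, ← hB.neg v w, hvw] using hxv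
  simp [ha, hb]

lemma span_pair_sup_orthCompIn_eq (hB : B.IsAlt) (hvL : v ∈ L) (hwL : w ∈ L)
    (hdv : HasDiv B L v d) (hdw : HasDiv B L w d) (hvw : B v w = d) :
    Submodule.span ℤ {v, w} ⊔ orthCompIn B L (Submodule.span ℤ {v, w}) = L := by
  have hle : Submodule.span ℤ {v, w} ≤ L := by
    simp [Submodule.span_le, Set.insert_subset_iff, hvL, hwL]
  refine le_antisymm (sup_le hle orthCompIn_le) fun x hx => ?_
  obtain ⟨n, hn⟩ := hdv.2.1 x hx
  obtain ⟨m, hm⟩ := hdw.2.1 x hx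
  have hproj : -m • v + n • w ∈ Submodule.span ℤ {v, w} := Submodule.mem_span_pair.2 ⟨-m, n, rfl⟩
  have horth : x - (-m • v + n • w) ∈ orthCompIn B L (Submodule.span ℤ {v, w}) := by
    refine mem_orthCompIn_span_pair.2 ⟨L.sub_mem hx (hle hproj), ?_, ?_⟩
    · simp [← hB.neg v x, ← hB.neg v w, hB.self_eq_zero v, hn, hvw]
    · simp [← hB.neg w x, hB.self_eq_zero w, hm, hvw]
  exact Submodule.mem_sup.2 ⟨_, hproj, _, horth, add_sub_cancel _ _⟩

lemma isSplitVec_of_partner (hB : B.IsAlt) (hvL : v ∈ L) (hwL : w ∈ L)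
    (hdv : HasDiv B L v d) (hdw : HasDiv B L w d) (hvw : B v w = d) : IsSplitVec B L v := by
  have hne : B v w ≠ 0 := hvw ▸ hdv.cast_ne_zero
  have hsup := span_pair_sup_orthCompIn_eq hB hvL hwL hdv hdw hvw
  exact ⟨Submodule.span ℤ {v, w}, Submodule.mem_span_of_mem (by simp), le_sup_left.trans hsup.le,
    finrank_span_pair_eq_two hB hne, hsup, span_pair_inf_orthCompIn_eq_bot hB hne⟩

theorem splitting_iff_exists_partner_general (hB : B.IsAlt) (hv : IsPrimitive L v)
    (hd : HasDiv B L v d) :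
    IsSplitVec B L v ↔ ∃ w : V, IsPrimitive L w ∧ HasDiv B L w d ∧ B v w = (d : ℚ) :=
  ⟨IsSplitVec.exists_partner hB hv hd, fun ⟨_, hw, hdw, hvw⟩ =>
    isSplitVec_of_partner hB hv.1 hw.1 hd hdw hvw⟩

end SymplecticLattice

/-- A primitive vector `v` is splitting iff there is a primitive vector `w` with
`div(w) = div(v)` and `(v, w) = div(v)`. -/
theorem splitting_iff_exists_partner
    (V : Type) [AddCommGroup V] [Module ℚ V]
    (B : V →ₗ[ℚ] V →ₗ[ℚ] ℚ)
    (halt : ∀ v, B v v = 0)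
    (hnd : ∀ v : V, (∀ w, B v w = 0) → v = 0)
    (L : Submodule ℤ V) (hfg : L.FG)
    (hspan : Submodule.span ℚ (L : Set V) = ⊤)
    (hint : ∀ x ∈ L, ∀ y ∈ L, ∃ n : ℤ, B x y = (n : ℚ))
    (v : V) (d : ℕ) (hv : IsPrimitive L v) (hd : HasDiv B L v d) :
    IsSplitVec B L v ↔
      ∃ w : V, IsPrimitive L w ∧ HasDiv B L w d ∧ B v w = (d : ℚ) :=
  splitting_iff_exists_partner_general halt hv hd
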